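/- Let the notation be as in the context, with two splicing data (superscripts 1 and 2) and the splicing map D. Suppose that in the second datum B0^2 is invertible (in particular ainf^2 = a1^2), B1^2 is injective, Binf^2 is surjective, and a0^2 = a1^2 + 1. Then dim ker(D) ≥ dim ker(B1^1 B0^1) · dim ker(X1^2) and dim coker(D) ≥ dim coker(B1^1 B0^1) · dim coker(Xinf^2). -/

import Mathlib

set_option maxHeartbeats 1600000

open Matrix Module
open scoped Kronecker

abbrev F2 : Type := ZMod 2

/-- A splicing datum: the algebraic data extracted from the knot Floer homology of a knot
in a homology sphere, as in Eftekhary's splicing formula. -/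
structure SplicingDatum where
  a0 : ℕ
  a1 : ℕ
  ainf : ℕ
  A0 : Matrix (Fin ainf) (Fin ainf) F2
  B0 : Matrix (Fin ainf) (Fin a1) F2
  C0 : Matrix (Fin a1) (Fin ainf) F2
  D0 : Matrix (Fin a1) (Fin a1) F2
  A1 : Matrix (Fin a0) (Fin a0) F2
  B1 : Matrix (Fin a0) (Fin ainf) F2
  C1 : Matrix (Fin ainf) (Fin a0) F2
  D1 : Matrix (Fin ainf) (Fin ainf) F2
  Ainf : Matrix (Fin a1) (Fin a1) F2
  Binf : Matrix (Fin a1) (Fin a0) F2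
  Cinf : Matrix (Fin a0) (Fin a1) F2
  Dinf : Matrix (Fin a0) (Fin a0) F2
  C0inv : Matrix (Fin a1) (Fin ainf) F2
  C1inv : Matrix (Fin ainf) (Fin a0) F2
  Cinfinv : Matrix (Fin a0) (Fin a1) F2
  inv0_left : Matrix.fromBlocks A0 B0 C0 D0 * Matrix.fromBlocks A0 B0 C0inv D0 = 1
  inv0_right : Matrix.fromBlocks A0 B0 C0inv D0 * Matrix.fromBlocks A0 B0 C0 D0 = 1
  inv1_left : Matrix.fromBlocks A1 B1 C1 D1 * Matrix.fromBlocks A1 B1 C1inv D1 = 1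
  inv1_right : Matrix.fromBlocks A1 B1 C1inv D1 * Matrix.fromBlocks A1 B1 C1 D1 = 1
  invinf_left : Matrix.fromBlocks Ainf Binf Cinf Dinf * Matrix.fromBlocks Ainf Binf Cinfinv Dinf = 1
  invinf_right : Matrix.fromBlocks Ainf Binf Cinfinv Dinf * Matrix.fromBlocks Ainf Binf Cinf Dinf = 1
  comm0 : A0 * B0 + B0 * D0 = 0
  comm1 : A1 * B1 + B1 * D1 = 0
  comminf : Ainf * Binf + Binf * Dinf = 0
  sq0 : B1 * B0 * Binf * (B1 * B0 * Binf) = 0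
  sq1 : Binf * B1 * B0 * (Binf * B1 * B0) = 0
  sqinf : B0 * Binf * B1 * (B0 * Binf * B1) = 0

/-- dimension of the kernel of the linear map induced by a matrix -/
noncomputable def kdim {m n : Type*} [Fintype n] (M : Matrix m n F2) : ℕ :=
  finrank F2 ↥(LinearMap.ker M.mulVecLin)

/-- dimension of the cokernel of the linear map induced by a matrix -/
noncomputable def cdim {m n : Type*} [Fintype n] (M : Matrix m n F2) : ℕ :=
  finrank F2 ((m → F2) ⧸ LinearMap.range M.mulVecLin)

/-- tensor product of two vectors, as a vector indexed by the product type -/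
def tensVec {m n : Type*} (x : m → F2) (y : n → F2) : m × n → F2 :=
  fun p => x p.1 * y p.2

namespace SplicingDatum

variable (d : SplicingDatum)

def X0M : Matrix (Fin d.a0) (Fin d.a0) F2 := d.B1 * d.B0 * d.Binf
def X1M : Matrix (Fin d.a1) (Fin d.a1) F2 := d.Binf * d.B1 * d.B0
def XinfM : Matrix (Fin d.ainf) (Fin d.ainf) F2 := d.B0 * d.Binf * d.B1

def tau0 : Matrix (Fin d.ainf ⊕ Fin d.a1) (Fin d.ainf ⊕ Fin d.a1) F2 :=
  Matrix.fromBlocks d.A0 d.B0 d.C0 d.D0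
def tau0inv : Matrix (Fin d.ainf ⊕ Fin d.a1) (Fin d.ainf ⊕ Fin d.a1) F2 :=
  Matrix.fromBlocks d.A0 d.B0 d.C0inv d.D0
def tau1 : Matrix (Fin d.a0 ⊕ Fin d.ainf) (Fin d.a0 ⊕ Fin d.ainf) F2 :=
  Matrix.fromBlocks d.A1 d.B1 d.C1 d.D1
def tau1inv : Matrix (Fin d.a0 ⊕ Fin d.ainf) (Fin d.a0 ⊕ Fin d.ainf) F2 :=
  Matrix.fromBlocks d.A1 d.B1 d.C1inv d.D1
def tauinf : Matrix (Fin d.a1 ⊕ Fin d.a0) (Fin d.a1 ⊕ Fin d.a0) F2 :=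
  Matrix.fromBlocks d.Ainf d.Binf d.Cinf d.Dinf
def tauinfinv : Matrix (Fin d.a1 ⊕ Fin d.a0) (Fin d.a1 ⊕ Fin d.a0) F2 :=
  Matrix.fromBlocks d.Ainf d.Binf d.Cinfinv d.Dinf

/-- the map `finf : F^{ainf+a1} → F^{a0+ainf}` -/
def finfM : Matrix (Fin d.a0 ⊕ Fin d.ainf) (Fin d.ainf ⊕ Fin d.a1) F2 :=
  Matrix.fromBlocks 0 0 (1 : Matrix (Fin d.ainf) (Fin d.ainf) F2) 0
/-- the map `f0 : F^{a0+ainf} → F^{a1+a0}` -/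
def f0M : Matrix (Fin d.a1 ⊕ Fin d.a0) (Fin d.a0 ⊕ Fin d.ainf) F2 :=
  Matrix.fromBlocks 0 0 (1 : Matrix (Fin d.a0) (Fin d.a0) F2) 0
/-- the map `f1 : F^{a1+a0} → F^{ainf+a1}` -/
def f1M : Matrix (Fin d.ainf ⊕ Fin d.a1) (Fin d.a1 ⊕ Fin d.a0) F2 :=
  Matrix.fromBlocks 0 0 (1 : Matrix (Fin d.a1) (Fin d.a1) F2) 0

def fbarinfM : Matrix (Fin d.a0 ⊕ Fin d.ainf) (Fin d.ainf ⊕ Fin d.a1) F2 :=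
  d.tau1inv * d.finfM * d.tau0
def fbar0M : Matrix (Fin d.a1 ⊕ Fin d.a0) (Fin d.a0 ⊕ Fin d.ainf) F2 :=
  d.tauinfinv * d.f0M * d.tau1
def fbar1M : Matrix (Fin d.ainf ⊕ Fin d.a1) (Fin d.a1 ⊕ Fin d.a0) F2 :=
  d.tau0inv * d.f1M * d.tauinf

noncomputable def r0 : ℕ := d.B0.rank
noncomputable def r1 : ℕ := d.B1.rank
noncomputable def rinf : ℕ := d.Binf.rank

noncomputable def k0 : ℕ :=
  finrank F2 ↥(LinearMap.ker d.f0M.mulVecLin ⊓ LinearMap.ker d.fbar0M.mulVecLin)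
noncomputable def k1 : ℕ :=
  finrank F2 ↥(LinearMap.ker d.f1M.mulVecLin ⊓ LinearMap.ker d.fbar1M.mulVecLin)
noncomputable def kinf : ℕ :=
  finrank F2 ↥(LinearMap.ker d.finfM.mulVecLin ⊓ LinearMap.ker d.fbarinfM.mulVecLin)

noncomputable def l0 : ℕ :=
  finrank F2 ↥(LinearMap.ker (d.f0M + d.fbar0M).mulVecLin) - d.k0
noncomputable def l1 : ℕ :=
  finrank F2 ↥(LinearMap.ker (d.f1M + d.fbar1M).mulVecLin) - d.k1
noncomputable def linf : ℕ :=
  finrank F2 ↥(LinearMap.ker (d.finfM + d.fbarinfM).mulVecLin) - d.kinf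

noncomputable def c0 : ℕ :=
  finrank F2 ((Fin d.a1 ⊕ Fin d.a0 → F2) ⧸
    (LinearMap.range d.f0M.mulVecLin ⊔ LinearMap.range d.fbar0M.mulVecLin))
noncomputable def c1 : ℕ :=
  finrank F2 ((Fin d.ainf ⊕ Fin d.a1 → F2) ⧸
    (LinearMap.range d.f1M.mulVecLin ⊔ LinearMap.range d.fbar1M.mulVecLin))
noncomputable def cinf : ℕ :=
  finrank F2 ((Fin d.a0 ⊕ Fin d.ainf → F2) ⧸
    (LinearMap.range d.finfM.mulVecLin ⊔ LinearMap.range d.fbarinfM.mulVecLin))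

noncomputable def dd0 : ℕ :=
  finrank F2 ↥(LinearMap.range d.f0M.mulVecLin ⊔ LinearMap.range d.fbar0M.mulVecLin) -
    finrank F2 ↥(LinearMap.range (d.f0M + d.fbar0M).mulVecLin)
noncomputable def dd1 : ℕ :=
  finrank F2 ↥(LinearMap.range d.f1M.mulVecLin ⊔ LinearMap.range d.fbar1M.mulVecLin) -
    finrank F2 ↥(LinearMap.range (d.f1M + d.fbar1M).mulVecLin)
noncomputable def ddinf : ℕ :=
  finrank F2 ↥(LinearMap.range d.finfM.mulVecLin ⊔ LinearMap.range d.fbarinfM.mulVecLin) -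
    finrank F2 ↥(LinearMap.range (d.finfM + d.fbarinfM).mulVecLin)

noncomputable def delta0 : ℕ := d.a0 - d.rinf - d.l0
noncomputable def delta1 : ℕ := d.a1 - d.r0 - d.l1
noncomputable def deltainf : ℕ := d.ainf - d.r1 - d.linf

end SplicingDatum

namespace SplicingDatum

/-- Index type of the source of the splicing map `D`. -/
abbrev Src (e1 e2 : SplicingDatum) : Type :=
  (Fin e1.ainf × Fin e2.ainf) ⊕ (Fin e1.ainf × Fin e2.a0) ⊕ (Fin e1.a1 × Fin e2.a0) ⊕
    (Fin e1.a0 × Fin e2.ainf) ⊕ (Fin e1.a0 × Fin e2.a1) ⊕ (Fin e1.a1 × Fin e2.a1)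

/-- Index type of the target of the splicing map `D`. -/
abbrev Tgt (e1 e2 : SplicingDatum) : Type :=
  (Fin e1.a0 × Fin e2.a0) ⊕ (Fin e1.ainf × Fin e2.a1) ⊕ (Fin e1.ainf × Fin e2.a0) ⊕
    (Fin e1.a1 × Fin e2.ainf) ⊕ (Fin e1.a0 × Fin e2.ainf) ⊕ (Fin e1.a1 × Fin e2.a1)

def row1 (e1 e2 : SplicingDatum) : Matrix (Fin e1.a0 × Fin e2.a0) (Src e1 e2) F2 :=
  Matrix.fromCols ((e1.Dinf * e1.B1) ⊗ₖ (e2.B1 * e2.A0)) <|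
  Matrix.fromCols ((e1.B1 * e1.A0) ⊗ₖ (1 : Matrix (Fin e2.a0) (Fin e2.a0) F2)) <|
  Matrix.fromCols ((e1.B1 * e1.B0) ⊗ₖ (1 : Matrix (Fin e2.a0) (Fin e2.a0) F2)) <|
  Matrix.fromCols ((e1.Dinf * e1.A1) ⊗ₖ (e2.B1 * e2.A0)) <|
  Matrix.fromCols ((1 : Matrix (Fin e1.a0) (Fin e1.a0) F2) ⊗ₖ (e2.B1 * e2.B0)) 0

def row2 (e1 e2 : SplicingDatum) : Matrix (Fin e1.ainf × Fin e2.a1) (Src e1 e2) F2 :=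
  Matrix.fromCols ((1 : Matrix (Fin e1.ainf) (Fin e1.ainf) F2) ⊗ₖ (e2.Binf * e2.B1)) <|
  Matrix.fromCols ((e1.D1 * e1.A0) ⊗ₖ (e2.Binf * e2.A1)) <|
  Matrix.fromCols ((e1.D1 * e1.B0) ⊗ₖ (e2.Binf * e2.A1)) <|
  Matrix.fromCols 0 <|
  Matrix.fromCols ((e1.B0 * e1.Binf) ⊗ₖ (1 : Matrix (Fin e2.a1) (Fin e2.a1) F2))
    ((e1.B0 * e1.Ainf) ⊗ₖ (1 : Matrix (Fin e2.a1) (Fin e2.a1) F2))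

def row3 (e1 e2 : SplicingDatum) : Matrix (Fin e1.ainf × Fin e2.a0) (Src e1 e2) F2 :=
  Matrix.fromCols ((1 : Matrix (Fin e1.ainf) (Fin e1.ainf) F2) ⊗ₖ (e2.Dinf * e2.B1)) <|
  Matrix.fromCols
    ((1 : Matrix (Fin e1.ainf) (Fin e1.ainf) F2) ⊗ₖ (1 : Matrix (Fin e2.a0) (Fin e2.a0) F2) +
      (e1.D1 * e1.A0) ⊗ₖ (e2.Dinf * e2.A1)) <|
  Matrix.fromCols ((e1.D1 * e1.B0) ⊗ₖ (e2.Dinf * e2.A1)) <|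
  Matrix.fromCols 0 <|
  Matrix.fromCols 0 0

def row4 (e1 e2 : SplicingDatum) : Matrix (Fin e1.a1 × Fin e2.ainf) (Src e1 e2) F2 :=
  Matrix.fromCols ((e1.Binf * e1.B1) ⊗ₖ (1 : Matrix (Fin e2.ainf) (Fin e2.ainf) F2)) <|
  Matrix.fromCols 0 <|
  Matrix.fromCols ((1 : Matrix (Fin e1.a1) (Fin e1.a1) F2) ⊗ₖ (e2.B0 * e2.Binf)) <|
  Matrix.fromCols ((e1.Binf * e1.A1) ⊗ₖ (1 : Matrix (Fin e2.ainf) (Fin e2.ainf) F2)) <|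
  Matrix.fromCols
    ((e1.D0 * e1.Binf) ⊗ₖ (e2.B0 * e2.Ainf) + (e1.X1M * e1.Binf) ⊗ₖ (e2.B0 * e2.X1M))
    ((e1.D0 * e1.Ainf) ⊗ₖ (e2.B0 * e2.Ainf) + (e1.X1M * e1.Ainf) ⊗ₖ (e2.B0 * e2.X1M))

def row5 (e1 e2 : SplicingDatum) : Matrix (Fin e1.a0 × Fin e2.ainf) (Src e1 e2) F2 :=
  Matrix.fromCols ((e1.Dinf * e1.B1) ⊗ₖ (e2.D1 * e2.A0)) <|
  Matrix.fromCols 0 <|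
  Matrix.fromCols 0 <|
  Matrix.fromCols
    ((1 : Matrix (Fin e1.a0) (Fin e1.a0) F2) ⊗ₖ (1 : Matrix (Fin e2.ainf) (Fin e2.ainf) F2) +
      (e1.Dinf * e1.A1) ⊗ₖ (e2.D1 * e2.A0)) <|
  Matrix.fromCols ((1 : Matrix (Fin e1.a0) (Fin e1.a0) F2) ⊗ₖ (e2.D1 * e2.B0)) 0

def row6 (e1 e2 : SplicingDatum) : Matrix (Fin e1.a1 × Fin e2.a1) (Src e1 e2) F2 :=
  Matrix.fromCols 0 <|
  Matrix.fromCols 0 <|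
  Matrix.fromCols ((1 : Matrix (Fin e1.a1) (Fin e1.a1) F2) ⊗ₖ (e2.D0 * e2.Binf)) <|
  Matrix.fromCols 0 <|
  Matrix.fromCols
    ((e1.D0 * e1.Binf) ⊗ₖ (e2.D0 * e2.Ainf) + (e1.X1M * e1.Binf) ⊗ₖ (e2.D0 * e2.X1M))
    ((1 : Matrix (Fin e1.a1) (Fin e1.a1) F2) ⊗ₖ (1 : Matrix (Fin e2.a1) (Fin e2.a1) F2) +
      (e1.D0 * e1.Ainf) ⊗ₖ (e2.D0 * e2.Ainf) + (e1.X1M * e1.Ainf) ⊗ₖ (e2.D0 * e2.X1M))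

/-- The splicing map `D = D(K1, K2)` as a `6 × 6` block matrix. -/
def spliceD (e1 e2 : SplicingDatum) : Matrix (Tgt e1 e2) (Src e1 e2) F2 :=
  Matrix.fromRows (row1 e1 e2) <| Matrix.fromRows (row2 e1 e2) <|
  Matrix.fromRows (row3 e1 e2) <| Matrix.fromRows (row4 e1 e2) <|
  Matrix.fromRows (row5 e1 e2) (row6 e1 e2)

end SplicingDatum

/-!
Both bounds come from explicit matrices. If the columns of `P` and `Q` span `ker (B1¹ B0¹)` and
`ker X1²`, then `D` kills the columns with entries `D1¹ B0¹ P ⊗ D1² B0² Q` in the first summand and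
`P ⊗ B1² B0² Q` in the third: the two contributions to rows 2 and 3 agree because `A1 B1 = B1 D1`,
hence cancel in characteristic two, and every other contribution contains `B1¹ B0¹ P` or `X1² Q`.
These columns are independent when `B1² B0²` is injective. Dually, if the rows of `P` and `Q` span
the left kernels of `B1¹ B0¹` and `Xinf²`, then the rows with entries `P ⊗ Q B0² Binf²`,
`P B1¹ A0¹ ⊗ Q B0² Ainf²` and `P B1¹ A0¹ ⊗ Q B0² Binf²` in the first three summands annihilate `D`,
and they are independent when `B0² Binf²` is surjective.
-/

section MatrixKernel

variable {K m n k : Type*} [Field K] [Fintype n]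

lemma exists_mul_eq_one_of_injective_mulVecLin [Fintype m] [DecidableEq n] {A : Matrix m n K}
    (hA : Function.Injective A.mulVecLin) : ∃ B : Matrix n m K, B * A = 1 := by
  classical
  obtain ⟨g, hg⟩ := A.mulVecLin.exists_leftInverse_of_injective (LinearMap.ker_eq_bot.mpr hA)
  refine ⟨g.toMatrix', toLin'.injective ?_⟩
  rw [toLin'_mul, toLin'_toMatrix', toLin'_one, toLin'_apply', hg]

lemma exists_leftInvertible_mul_eq_zero (M : Matrix m n K) :
    ∃ (P : Matrix n (Fin (finrank K (LinearMap.ker M.mulVecLin))) K)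
      (P' : Matrix (Fin (finrank K (LinearMap.ker M.mulVecLin))) n K),
      M * P = 0 ∧ P' * P = 1 := by
  classical
  let b := finBasis K (LinearMap.ker M.mulVecLin)
  let f := (LinearMap.ker M.mulVecLin).subtype ∘ₗ b.equivFun.symm.toLinearMap
  have hf : f.toMatrix'.mulVecLin = f := toLin'_toMatrix' f
  have hinj : Function.Injective f.toMatrix'.mulVecLin := by
    rw [hf]
    exact Subtype.val_injective.comp b.equivFun.symm.injective
  obtain ⟨P', hP'⟩ := exists_mul_eq_one_of_injective_mulVecLin hinj
  refine ⟨f.toMatrix', P', toLin'.injective ?_, hP'⟩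
  rw [toLin'_mul, toLin'_toMatrix', map_zero, toLin'_apply']
  exact LinearMap.ext fun x => (b.equivFun.symm x).2

lemma card_le_finrank_ker_of_mul_eq_zero [Fintype k] [DecidableEq k] {M : Matrix m n K}
    {P : Matrix n k K} {P' : Matrix k n K} (hMP : M * P = 0) (hP : P' * P = 1) :
    Fintype.card k ≤ finrank K (LinearMap.ker M.mulVecLin) := by
  have hinj : Function.Injective P.mulVecLin :=
    Function.LeftInverse.injective (g := P'.mulVec) fun x => by simp [hP]
  have hmem (x : k → K) : P.mulVecLin x ∈ LinearMap.ker M.mulVecLin := by simp [hMP]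
  rw [← finrank_fintype_fun_eq_card K]
  exact LinearMap.finrank_le_finrank_of_injective (f := P.mulVecLin.codRestrict _ hmem)
    (hinj.codRestrict hmem)

lemma finrank_coker_mulVecLin [Fintype m] (M : Matrix m n K) :
    finrank K ((m → K) ⧸ LinearMap.range M.mulVecLin) =
      finrank K (LinearMap.ker Mᵀ.mulVecLin) := by
  have hquot := (LinearMap.range M.mulVecLin).finrank_quotient_add_finrank
  have hker := Mᵀ.mulVecLin.finrank_range_add_finrank_ker
  have hrank : finrank K (LinearMap.range Mᵀ.mulVecLin) =
      finrank K (LinearMap.range M.mulVecLin) := M.rank_transpose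
  omega

lemma exists_rightInvertible_mul_eq_zero [Fintype m] (M : Matrix m n K) :
    ∃ (P : Matrix (Fin (finrank K ((m → K) ⧸ LinearMap.range M.mulVecLin))) m K)
      (P' : Matrix m (Fin (finrank K ((m → K) ⧸ LinearMap.range M.mulVecLin))) K),
      P * M = 0 ∧ P * P' = 1 := by
  rw [finrank_coker_mulVecLin]
  obtain ⟨P, P', hMP, hP⟩ := exists_leftInvertible_mul_eq_zero Mᵀ
  exact ⟨Pᵀ, P'ᵀ, by simpa using congrArg transpose hMP, by simpa using congrArg transpose hP⟩

lemma card_le_finrank_coker_of_mul_eq_zero [Fintype m] [Fintype k] [DecidableEq k]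
    {M : Matrix m n K} {P : Matrix k m K} {P' : Matrix m k K} (hPM : P * M = 0)
    (hP : P * P' = 1) :
    Fintype.card k ≤ finrank K ((m → K) ⧸ LinearMap.range M.mulVecLin) := by
  rw [finrank_coker_mulVecLin]
  exact card_le_finrank_ker_of_mul_eq_zero (P := Pᵀ) (P' := P'ᵀ)
    (by simpa using congrArg transpose hPM) (by simpa using congrArg transpose hP)

end MatrixKernel

lemma fromCols_add_fromCols {R m n₁ n₂ : Type*} [Add R] (A C : Matrix m n₁ R)
    (B D : Matrix m n₂ R) : fromCols A B + fromCols C D = fromCols (A + C) (B + D) := by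
  ext _ (_ | _) <;> rfl

namespace SplicingDatum

section Datum

variable (d : SplicingDatum)

lemma A0_mul_B0 : d.A0 * d.B0 = d.B0 * d.D0 := by
  rw [← sub_eq_zero, ZModModule.sub_eq_add, d.comm0]

lemma A1_mul_B1 : d.A1 * d.B1 = d.B1 * d.D1 := by
  rw [← sub_eq_zero, ZModModule.sub_eq_add, d.comm1]

lemma Ainf_mul_Binf : d.Ainf * d.Binf = d.Binf * d.Dinf := by
  rw [← sub_eq_zero, ZModModule.sub_eq_add, d.comminf]

end Datum

variable (e1 e2 : SplicingDatum) {k l : Type*}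

/-- Lifts columns `P` in `ker (B1¹ B0¹)` and `Q` in `ker X1²` to the columns of a matrix in the
kernel of the splicing map, one for each pair. -/
def kerMatrix (P : Matrix (Fin e1.a1) k F2) (Q : Matrix (Fin e2.a1) l F2) :
    Matrix (Src e1 e2) (k × l) F2 :=
  fromRows ((e1.D1 * e1.B0 * P) ⊗ₖ (e2.D1 * e2.B0 * Q)) <|
  fromRows 0 <|
  fromRows (P ⊗ₖ (e2.B1 * e2.B0 * Q)) <|
  fromRows 0 <|
  fromRows 0 0

/-- Lifts rows `P` annihilating `B1¹ B0¹` and `Q` annihilating `Xinf²` to the rows of a matrix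
annihilating the splicing map, one for each pair. They represent functionals on its cokernel. -/
def cokerMatrix (P : Matrix k (Fin e1.a0) F2) (Q : Matrix l (Fin e2.ainf) F2) :
    Matrix (k × l) (Tgt e1 e2) F2 :=
  fromCols (P ⊗ₖ (Q * e2.B0 * e2.Binf)) <|
  fromCols ((P * e1.B1 * e1.A0) ⊗ₖ (Q * e2.B0 * e2.Ainf)) <|
  fromCols ((P * e1.B1 * e1.A0) ⊗ₖ (Q * e2.B0 * e2.Binf)) <|
  fromCols 0 <|
  fromCols 0 0

variable {e1 e2}

lemma spliceD_mul_kerMatrix {P : Matrix (Fin e1.a1) k F2} {Q : Matrix (Fin e2.a1) l F2}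
    (hP : e1.B1 * e1.B0 * P = 0) (hQ : e2.X1M * Q = 0) :
    spliceD e1 e2 * kerMatrix e1 e2 P Q = 0 := by
  rw [X1M] at hQ
  have hBDB : e1.B1 * (e1.D1 * (e1.B0 * P)) = 0 := by
    rw [← Matrix.mul_assoc, ← A1_mul_B1, Matrix.mul_assoc, ← Matrix.mul_assoc e1.B1, hP,
      Matrix.mul_zero]
  have hAB : e2.A1 * (e2.B1 * (e2.B0 * Q)) = e2.B1 * (e2.D1 * (e2.B0 * Q)) := by
    rw [← Matrix.mul_assoc, A1_mul_B1, Matrix.mul_assoc]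
  simp only [Matrix.mul_assoc] at hP hQ
  simp only [spliceD, row1, row2, row3, row4, row5, row6, kerMatrix, fromRows_mul,
    fromCols_mul_fromRows, ← mul_kronecker_mul, Matrix.mul_assoc, Matrix.one_mul, hP, hQ, hBDB,
    hAB, Matrix.mul_zero, Matrix.zero_mul, zero_kronecker, kronecker_zero, add_zero, zero_add,
    ZModModule.add_self, fromRows_zero]

lemma cokerMatrix_mul_spliceD {P : Matrix k (Fin e1.a0) F2} {Q : Matrix l (Fin e2.ainf) F2}
    (hP : P * (e1.B1 * e1.B0) = 0) (hQ : Q * e2.XinfM = 0) :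
    cokerMatrix e1 e2 P Q * spliceD e1 e2 = 0 := by
  rw [XinfM] at hQ
  have hBAB : P * e1.B1 * e1.A0 * e1.B0 = 0 := by
    rw [Matrix.mul_assoc, A0_mul_B0, ← Matrix.mul_assoc, Matrix.mul_assoc P, hP, Matrix.zero_mul]
  have hAB : Q * e2.B0 * e2.Ainf * e2.Binf = Q * e2.B0 * e2.Binf * e2.Dinf := by
    rw [Matrix.mul_assoc, Ainf_mul_Binf, ← Matrix.mul_assoc]
  have hcancel (S T : Matrix (k × l) (Fin e1.ainf × Fin e2.a0) F2) : S + (T + (S + T)) = 0 := by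
    rw [← add_assoc, ZModModule.add_self]
  simp only [← Matrix.mul_assoc] at hP hQ
  simp only [spliceD, row1, row2, row3, row4, row5, row6, cokerMatrix, fromCols_mul_fromRows,
    mul_fromCols, fromCols_add_fromCols, Matrix.mul_add, ← mul_kronecker_mul, ← Matrix.mul_assoc,
    Matrix.mul_one, hP, hQ, hBAB, hAB, Matrix.mul_zero, Matrix.zero_mul, zero_kronecker,
    kronecker_zero, add_zero, hcancel, ZModModule.add_self, fromCols_zero]

lemma exists_mul_kerMatrix_eq_one [DecidableEq k] [DecidableEq l]
    {P : Matrix (Fin e1.a1) k F2} {P' : Matrix k (Fin e1.a1) F2} {Q : Matrix (Fin e2.a1) l F2}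
    {Q' : Matrix l (Fin e2.a0) F2} (hP : P' * P = 1) (hQ : Q' * (e2.B1 * e2.B0 * Q) = 1) :
    ∃ L : Matrix (k × l) (Src e1 e2) F2, L * kerMatrix e1 e2 P Q = 1 := by
  refine ⟨fromCols 0 (fromCols 0 (fromCols (P' ⊗ₖ Q') 0)), ?_⟩
  simp only [kerMatrix, fromCols_mul_fromRows, ← mul_kronecker_mul, Matrix.zero_mul, zero_add,
    add_zero, hP, hQ, one_kronecker_one]

lemma exists_cokerMatrix_mul_eq_one [DecidableEq k] [DecidableEq l]
    {P : Matrix k (Fin e1.a0) F2} {P' : Matrix (Fin e1.a0) k F2} {Q : Matrix l (Fin e2.ainf) F2}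
    {Q' : Matrix (Fin e2.a0) l F2} (hP : P * P' = 1) (hQ : Q * e2.B0 * e2.Binf * Q' = 1) :
    ∃ R : Matrix (Tgt e1 e2) (k × l) F2, cokerMatrix e1 e2 P Q * R = 1 := by
  refine ⟨fromRows (P' ⊗ₖ Q') 0, ?_⟩
  rw [cokerMatrix, fromCols_mul_fromRows, ← mul_kronecker_mul, Matrix.mul_zero, add_zero, hP, hQ,
    one_kronecker_one]

theorem kdim_mul_kdim_le_kdim_spliceD (h : Function.Injective (e2.B1 * e2.B0).mulVecLin) :
    kdim (e1.B1 * e1.B0) * kdim e2.X1M ≤ kdim (spliceD e1 e2) := by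
  obtain ⟨P, P', hP, hP'⟩ := exists_leftInvertible_mul_eq_zero (e1.B1 * e1.B0)
  obtain ⟨Q, Q', hQ, hQ'⟩ := exists_leftInvertible_mul_eq_zero e2.X1M
  obtain ⟨R, hR⟩ := exists_mul_eq_one_of_injective_mulVecLin h
  have hQR : Q' * R * (e2.B1 * e2.B0 * Q) = 1 := by
    rw [Matrix.mul_assoc, ← Matrix.mul_assoc R, hR, Matrix.one_mul, hQ']
  obtain ⟨L, hL⟩ := exists_mul_kerMatrix_eq_one hP' hQR
  simpa [kdim] using card_le_finrank_ker_of_mul_eq_zero (spliceD_mul_kerMatrix hP hQ) hL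

theorem cdim_mul_cdim_le_cdim_spliceD (h : Function.Surjective (e2.B0 * e2.Binf).mulVecLin) :
    cdim (e1.B1 * e1.B0) * cdim e2.XinfM ≤ cdim (spliceD e1 e2) := by
  obtain ⟨P, P', hP, hP'⟩ := exists_rightInvertible_mul_eq_zero (e1.B1 * e1.B0)
  obtain ⟨Q, Q', hQ, hQ'⟩ := exists_rightInvertible_mul_eq_zero e2.XinfM
  obtain ⟨S, hS⟩ := mulVec_surjective_iff_exists_right_inverse.mp h
  have hQS : Q * e2.B0 * e2.Binf * (S * Q') = 1 := by
    rw [Matrix.mul_assoc Q, Matrix.mul_assoc Q, ← Matrix.mul_assoc _ S, hS, Matrix.one_mul, hQ']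
  obtain ⟨R, hR⟩ := exists_cokerMatrix_mul_eq_one hP' hQS
  simpa [cdim] using card_le_finrank_coker_of_mul_eq_zero (cokerMatrix_mul_spliceD hP hQ) hR

end SplicingDatum

open SplicingDatum in
theorem stmt12_general (e1 e2 : SplicingDatum)
    (hker : Function.Injective (e2.B1 * e2.B0).mulVecLin)
    (hcoker : Function.Surjective (e2.B0 * e2.Binf).mulVecLin) :
    kdim (spliceD e1 e2) ≥ kdim (e1.B1 * e1.B0) * kdim e2.X1M ∧
    cdim (spliceD e1 e2) ≥ cdim (e1.B1 * e1.B0) * cdim e2.XinfM :=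
  ⟨kdim_mul_kdim_le_kdim_spliceD hker, cdim_mul_cdim_le_cdim_spliceD hcoker⟩

open SplicingDatum in
/-- lower bounds for `ker D` and `coker D` when `B0²` is invertible
(in particular `ainf² = a1²`), `B1²` is injective, `Binf²` is surjective and
`a0² = a1² + 1`. -/
theorem stmt12 (e1 e2 : SplicingDatum)
    (hsq : e2.ainf = e2.a1)
    (hB0 : Function.Bijective e2.B0.mulVecLin)
    (hB1 : Function.Injective e2.B1.mulVecLin)
    (hBinf : Function.Surjective e2.Binf.mulVecLin)
    (ha0 : e2.a0 = e2.a1 + 1) :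
    kdim (spliceD e1 e2) ≥ kdim (e1.B1 * e1.B0) * kdim e2.X1M ∧
    cdim (spliceD e1 e2) ≥ cdim (e1.B1 * e1.B0) * cdim e2.XinfM := by
  exact stmt12_general e1 e2 (by rw [mulVecLin_mul]; exact hB1.comp hB0.1)
    (by rw [mulVecLin_mul]; exact hB0.2.comp hBinf)
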